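/- For every n ≥ 3, the wheel graph W_n is a first-player win in graph chomp; that is, g(W_n) ≠ 0. -/

import Mathlib

/-!
The winning first move deletes the center, which leaves the cycle `C_n`, and `grundy C_n = 0`
(`grundy_hub_removed`). Indeed, index the `2n` cells of the cycle cyclically, vertices and edges
alternating (`cell`). When the opponent chooses the cell with index `a`, answer with the antipodal
cell, of index `a + n`. The reflection of the cycle sending the cell `k` to the cell `2a - k` fixes
exactly these two cells (`two_fixed_ne_zero`), so after the two moves the position is symmetric
under an involution that fixes none of its cells. From then on every move `σ` is answered by its
mirror image, so that position has nim-value zero (`grundy_eq_zero_of_involution`).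
-/

attribute [local instance] Classical.propDecidable

/-- The minimal excludant of a finite set of naturals. -/
noncomputable def mex (s : Finset ℕ) : ℕ := sInf {n : ℕ | n ∉ s}

/-- The position resulting from choosing `σ` in subset take-away:
remove `σ` together with every element containing it. -/
noncomputable def takeawayMove {V : Type*} [DecidableEq V] (Δ : Finset (Finset V))
    (σ : Finset V) : Finset (Finset V) :=
  Δ.filter (fun t => ¬ σ ⊆ t)

/-- The Grundy (nim-)value of subset take-away played on `Δ`: the minimal excludant of the
Grundy values of all positions reachable in one move. -/
noncomputable def grundy {V : Type*} [DecidableEq V] (Δ : Finset (Finset V)) : ℕ :=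
  mex (Δ.attach.image (fun σ => grundy (takeawayMove Δ σ.1)))
termination_by Δ.card
decreasing_by
  simp only [takeawayMove]
  exact Finset.card_lt_card (Finset.filter_ssubset.mpr ⟨σ.1, σ.2, by simp⟩)

/-- The simplicial complex of vertices and edges of a finite simple graph `G`.
Graph chomp on `G` is subset take-away on this complex, so the nim-value of graph chomp
on `G` is `grundy (graphComplex G)`. -/
noncomputable def graphComplex {V : Type*} [Fintype V] [DecidableEq V] (G : SimpleGraph V) :
    Finset (Finset V) :=
  (Finset.univ : Finset V).image (fun v => ({v} : Finset V)) ∪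
    Finset.univ.filter (fun s : Finset V => ∃ u v, G.Adj u v ∧ s = {u, v})

/-- The wheel graph `W_n`: an `n`-cycle (on `Fin n`, with `i` adjacent to `i + 1 mod n`)
together with a center vertex (`none`) joined by an edge to every cycle vertex. -/
def wheelGraph (n : ℕ) : SimpleGraph (Option (Fin n)) :=
  SimpleGraph.fromRel (fun u v =>
    u = none ∨ ∃ i j : Fin n, u = some i ∧ v = some j ∧ j.val = (i.val + 1) % n)

/-! ### Outcome classes and symmetric positions -/

theorem mex_eq_zero_iff (s : Finset ℕ) : mex s = 0 ↔ 0 ∉ s := by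
  unfold mex
  rw [Nat.sInf_eq_zero]
  constructor
  · rintro (h | h)
    · exact h
    · obtain ⟨x, hx⟩ := Infinite.exists_notMem_finset s
      have : x ∈ {n : ℕ | n ∉ s} := hx
      rw [h] at this
      exact this.elim
  · exact fun h => Or.inl h

theorem grundy_eq_zero_iff {V : Type*} [DecidableEq V] (Δ : Finset (Finset V)) :
    grundy Δ = 0 ↔ ∀ σ ∈ Δ, grundy (takeawayMove Δ σ) ≠ 0 := by
  rw [grundy, mex_eq_zero_iff]
  simp

theorem mem_takeawayMove {V : Type*} [DecidableEq V] {Δ : Finset (Finset V)}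
    {σ t : Finset V} : t ∈ takeawayMove Δ σ ↔ t ∈ Δ ∧ ¬ σ ⊆ t := by
  simp [takeawayMove]

theorem card_takeawayMove_lt {V : Type*} [DecidableEq V] {Δ : Finset (Finset V)}
    {σ : Finset V} (h : σ ∈ Δ) : (takeawayMove Δ σ).card < Δ.card := by
  simp only [takeawayMove]
  exact Finset.card_lt_card (Finset.filter_ssubset.mpr ⟨σ, h, by simp⟩)

theorem image_image_involutive {V : Type*} [DecidableEq V] {f : V → V}
    (hf : Function.Involutive f) (s : Finset V) : (s.image f).image f = s := by
  rw [Finset.image_image, hf.comp_self, Finset.image_id]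

theorem image_subset_comm {V : Type*} [DecidableEq V] {f : V → V}
    (hf : Function.Involutive f) {s t : Finset V} (h : s ⊆ t.image f) : s.image f ⊆ t := by
  have := Finset.image_subset_image (f := f) h
  rwa [image_image_involutive hf] at this

/-- The mirror strategy: a position preserved by an involution of the vertices that fixes none of
its cells is a second-player win. -/
theorem grundy_eq_zero_of_involution {V : Type*} [DecidableEq V] {f : V → V}
    (hf : Function.Involutive f) (Δ : Finset (Finset V))
    (hΔ : ∀ s ∈ Δ, s.image f ∈ Δ) (hfix : ∀ s ∈ Δ, s.image f ≠ s) : grundy Δ = 0 := by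
  induction hN : Δ.card using Nat.strong_induction_on generalizing Δ with
  | _ N ih =>
    subst hN
    rw [grundy_eq_zero_iff]
    intro σ hσ h0
    -- The mirror image is still available: equal cardinality turns inclusion into equality.
    have hmem : σ.image f ∈ takeawayMove Δ σ := by
      refine mem_takeawayMove.2 ⟨hΔ σ hσ, fun hsub => hfix σ hσ ?_⟩
      exact (Finset.eq_of_subset_of_card_le hsub Finset.card_image_le).symm
    refine (grundy_eq_zero_iff _).1 h0 _ hmem (ih _ ?_ _ ?_ ?_ rfl)
    · exact (card_takeawayMove_lt hmem).trans (card_takeawayMove_lt hσ)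
    · intro s hs
      obtain ⟨hs1, hs2⟩ := mem_takeawayMove.1 hs
      obtain ⟨hs3, hs4⟩ := mem_takeawayMove.1 hs1
      refine mem_takeawayMove.2 ⟨mem_takeawayMove.2 ⟨hΔ s hs3, fun h => ?_⟩, fun h => ?_⟩
      · exact hs2 (image_subset_comm hf h)
      · apply hs4
        have := image_subset_comm hf h
        rwa [image_image_involutive hf] at this
    · intro s hs
      exact hfix s (mem_takeawayMove.1 (mem_takeawayMove.1 hs).1).1

/-- If an involution preserving `Δ` fixes only the cells `σ` and `σ'`, then choosing `σ` is
answered by choosing `σ'`, after which the mirror strategy applies. -/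
theorem two_fixed_ne_zero {V : Type*} [DecidableEq V] {f : V → V}
    (hf : Function.Involutive f) (Δ : Finset (Finset V))
    (hΔ : ∀ s ∈ Δ, s.image f ∈ Δ) {σ σ' : Finset V} (hσ : σ.image f = σ)
    (hσ' : σ'.image f = σ') (hmem : σ' ∈ Δ) (hsub : ¬ σ ⊆ σ')
    (hfix : ∀ s ∈ Δ, s.image f = s → s = σ ∨ s = σ') : grundy (takeawayMove Δ σ) ≠ 0 := by
  intro h0
  refine (grundy_eq_zero_iff _).1 h0 σ' (mem_takeawayMove.2 ⟨hmem, hsub⟩)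
    (grundy_eq_zero_of_involution hf _ ?_ ?_)
  · intro s hs
    obtain ⟨hs1, hs2⟩ := mem_takeawayMove.1 hs
    obtain ⟨hs3, hs4⟩ := mem_takeawayMove.1 hs1
    refine mem_takeawayMove.2 ⟨mem_takeawayMove.2 ⟨hΔ s hs3, fun h => ?_⟩, fun h => ?_⟩
    · exact hs4 (hσ ▸ image_subset_comm hf h)
    · exact hs2 (hσ' ▸ image_subset_comm hf h)
  · intro s hs h
    obtain ⟨hs1, hs2⟩ := mem_takeawayMove.1 hs
    obtain ⟨hs3, hs4⟩ := mem_takeawayMove.1 hs1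
    rcases hfix s hs3 h with rfl | rfl
    · exact hs4 subset_rfl
    · exact hs2 subset_rfl

/-! ### The cells of the cycle -/

/-- The rim vertex of the wheel with index `x` modulo `n`. -/
def rim (n : ℕ) [NeZero n] (x : ℤ) : Option (Fin n) :=
  some ⟨(x % n).toNat, by
    have hn : (0 : ℤ) < n := by exact_mod_cast Nat.pos_of_ne_zero (NeZero.ne n)
    have := Int.emod_lt_of_pos x hn
    have := Int.emod_nonneg x hn.ne'
    omega⟩

theorem rim_eq_iff {n : ℕ} [NeZero n] {x y : ℤ} : rim n x = rim n y ↔ (n : ℤ) ∣ x - y := by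
  have hn : (n : ℤ) ≠ 0 := by exact_mod_cast NeZero.ne n
  have hx := Int.emod_nonneg x hn
  have hy := Int.emod_nonneg y hn
  rw [Int.dvd_iff_emod_eq_zero, ← Int.emod_eq_emod_iff_emod_sub_eq_zero]
  simp only [rim, Option.some.injEq, Fin.mk.injEq]
  omega

theorem rim_val {n : ℕ} [NeZero n] (i : Fin n) : rim n (i.val : ℤ) = some i := by
  simp only [rim, Option.some.injEq]
  ext
  simp only
  rw [Int.emod_eq_of_lt (by positivity) (by exact_mod_cast i.isLt)]
  simp

/-- The cells of the cycle, indexed cyclically modulo `2n`: `cell n (2 * i)` is the vertex `i`, and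
`cell n (2 * i + 1)` is the edge from `i` to `i + 1`. -/
noncomputable def cell (n : ℕ) [NeZero n] (k : ℤ) : Finset (Option (Fin n)) :=
  {rim n (k / 2), rim n ((k + 1) / 2)}

/-- The reflection `i ↦ a - i` of the rim, fixing the center. -/
def reflect (n : ℕ) [NeZero n] (a : ℤ) : Option (Fin n) → Option (Fin n)
  | none => none
  | some i => rim n (a - i.val)

theorem reflect_rim {n : ℕ} [NeZero n] (a x : ℤ) : reflect n a (rim n x) = rim n (a - x) := by
  have hn : (n : ℤ) ≠ 0 := by exact_mod_cast NeZero.ne n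
  have hx := Int.emod_nonneg x hn
  simp only [rim, reflect]
  change rim n _ = rim n _
  rw [rim_eq_iff, Int.toNat_of_nonneg hx]
  have := Int.dvd_self_sub_emod (x := x) (m := n)
  rwa [show a - x % n - (a - x) = x - x % n by ring]

theorem reflect_involutive {n : ℕ} [NeZero n] (a : ℤ) : Function.Involutive (reflect n a) := by
  rintro (_ | i)
  · rfl
  · rw [← rim_val i, reflect_rim, reflect_rim, sub_sub_cancel]

theorem image_reflect_cell {n : ℕ} [NeZero n] (a k : ℤ) :
    (cell n k).image (reflect n a) = cell n (2 * a - k) := by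
  simp only [cell, Finset.image_insert, Finset.image_singleton, reflect_rim]
  rw [show (2 * a - k) / 2 = a - (k + 1) / 2 by omega,
    show (2 * a - k + 1) / 2 = a - k / 2 by omega, Finset.pair_comm]

theorem cell_eq_of_dvd {n : ℕ} [NeZero n] {j k : ℤ} (h : (2 * n : ℤ) ∣ j - k) :
    cell n j = cell n k := by
  obtain ⟨t, ht⟩ := h
  rw [mul_assoc] at ht
  have h1 : rim n (j / 2) = rim n (k / 2) := rim_eq_iff.2 ⟨t, by omega⟩
  have h2 : rim n ((j + 1) / 2) = rim n ((k + 1) / 2) := rim_eq_iff.2 ⟨t, by omega⟩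
  rw [cell, cell, h1, h2]

theorem not_dvd_of_pos_lt {n : ℕ} {d : ℤ} (h0 : 0 < d) (hd : d < n) : ¬ (n : ℤ) ∣ d :=
  fun h => absurd (Int.le_of_dvd h0 h) (by omega)

/-- The `2n` cells are distinct. This uses `3 ≤ n`: for `n = 1` the edge is a loop, and for `n = 2`
the two edges coincide. -/
theorem dvd_of_cell_eq {n : ℕ} [NeZero n] (hn : 3 ≤ n) {j k : ℤ} (h : cell n j = cell n k) :
    (2 * n : ℤ) ∣ j - k := by
  have one : ¬ (n : ℤ) ∣ 1 := not_dvd_of_pos_lt (by omega) (by omega)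
  have two : ¬ (n : ℤ) ∣ 2 := not_dvd_of_pos_lt (by omega) (by omega)
  have key : ∀ i l : ℤ, j - k = 2 * (i - l) → (n : ℤ) ∣ i - l → (2 * n : ℤ) ∣ j - k :=
    fun i l h h' => h ▸ mul_dvd_mul_left 2 h'
  simp only [cell] at h
  have m1 : rim n (j / 2) ∈ ({rim n (k / 2), rim n ((k + 1) / 2)} : Finset _) := by simp [← h]
  have m2 : rim n ((j + 1) / 2) ∈ ({rim n (k / 2), rim n ((k + 1) / 2)} : Finset _) := by
    simp [← h]
  have m3 : rim n (k / 2) ∈ ({rim n (j / 2), rim n ((j + 1) / 2)} : Finset _) := by simp [h]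
  have m4 : rim n ((k + 1) / 2) ∈ ({rim n (j / 2), rim n ((j + 1) / 2)} : Finset _) := by
    simp [h]
  simp only [Finset.mem_insert, Finset.mem_singleton, rim_eq_iff] at m1 m2 m3 m4
  rcases Int.even_or_odd' j with ⟨i, rfl | rfl⟩ <;> rcases Int.even_or_odd' k with ⟨l, rfl | rfl⟩
  · refine key i l (by ring) ?_
    rcases m1 with m | m <;> convert m using 1 <;> omega
  · exfalso
    -- The endpoints of an edge are distinct, so no edge is a vertex.
    have e1 : (n : ℤ) ∣ l - i := by rcases m3 with m | m <;> convert m using 1 <;> omega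
    have e2 : (n : ℤ) ∣ l + 1 - i := by rcases m4 with m | m <;> convert m using 1 <;> omega
    exact one (by have := dvd_sub e2 e1; ring_nf at this; exact this)
  · exfalso
    have e1 : (n : ℤ) ∣ i - l := by rcases m1 with m | m <;> convert m using 1 <;> omega
    have e2 : (n : ℤ) ∣ i + 1 - l := by rcases m2 with m | m <;> convert m using 1 <;> omega
    exact one (by have := dvd_sub e2 e1; ring_nf at this; exact this)
  · refine key i l (by ring) ?_
    rcases m1 with m | m
    · convert m using 1; omega
    rcases m2 with m' | m'
    · rw [show (2 * i + 1) / 2 - (2 * l + 1 + 1) / 2 = i - l - 1 by omega] at m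
      rw [show (2 * i + 1 + 1) / 2 - (2 * l + 1) / 2 = i - l + 1 by omega] at m'
      exact (two (by have := dvd_sub m' m; ring_nf at this; exact this)).elim
    · convert m' using 1; omega

theorem not_cell_subset_antipode {n : ℕ} [NeZero n] (hn : 3 ≤ n) (a : ℤ) :
    ¬ cell n a ⊆ cell n (a + n) := by
  intro h
  have m : rim n (a / 2) ∈ cell n (a + n) := h (by simp [cell])
  simp only [cell, Finset.mem_insert, Finset.mem_singleton, rim_eq_iff] at m
  rcases m with m | m
  · exact not_dvd_of_pos_lt (by omega) (by omega) ((dvd_sub_comm).1 m)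
  · exact not_dvd_of_pos_lt (by omega) (by omega) ((dvd_sub_comm).1 m)

/-! ### The wheel without its center -/

theorem mem_hub_removed {n : ℕ} [NeZero n] (hn : 3 ≤ n) (s : Finset (Option (Fin n))) :
    s ∈ takeawayMove (graphComplex (wheelGraph n)) {none} ↔ ∃ k : ℤ, s = cell n k := by
  have hsucc : ∀ i j : Fin n, j.val = (i.val + 1) % n →
      cell n (2 * i.val + 1) = {some i, some j} := by
    intro i j h
    rw [cell, show (2 * (i.val : ℤ) + 1) / 2 = i.val by omega,
      show (2 * (i.val : ℤ) + 1 + 1) / 2 = i.val + 1 by omega, rim_val]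
    congr 2
    rw [← rim_val j, rim_eq_iff, h]
    push_cast
    exact Int.dvd_self_sub_emod
  simp only [mem_takeawayMove, graphComplex, Finset.mem_union, Finset.mem_image, Finset.mem_filter,
    Finset.mem_univ, true_and, Finset.singleton_subset_iff]
  constructor
  · rintro ⟨⟨_ | i, rfl⟩ | ⟨u, v, huv, rfl⟩, h⟩
    · simp at h
    · refine ⟨2 * i.val, ?_⟩
      rw [cell, show (2 * (i.val : ℤ)) / 2 = i.val by omega,
        show (2 * (i.val : ℤ) + 1) / 2 = i.val by omega, rim_val]
      simp
    · simp only [Finset.mem_insert, Finset.mem_singleton, not_or] at h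
      rw [wheelGraph, SimpleGraph.fromRel_adj] at huv
      rcases huv.2 with (e | ⟨i, j, rfl, rfl, e⟩) | (e | ⟨i, j, rfl, rfl, e⟩)
      · exact (h.1 e.symm).elim
      · exact ⟨_, (hsucc i j e).symm⟩
      · exact (h.2 e.symm).elim
      · exact ⟨_, (Finset.pair_comm _ _).trans (hsucc i j e).symm⟩
  · rintro ⟨k, rfl⟩
    refine ⟨?_, by simp [cell, rim]⟩
    rcases Int.even_or_odd' k with ⟨i, rfl | rfl⟩
    · left
      refine ⟨rim n i, ?_⟩
      rw [cell, show (2 * i) / 2 = i by omega, show (2 * i + 1) / 2 = i by omega]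
      simp
    · right
      have hne : rim n i ≠ rim n (i + 1) := by
        rw [Ne, rim_eq_iff, dvd_sub_comm]
        exact not_dvd_of_pos_lt (by omega) (by omega)
      refine ⟨rim n i, rim n (i + 1), ?_, ?_⟩
      · rw [wheelGraph, SimpleGraph.fromRel_adj]
        refine ⟨hne, Or.inl (Or.inr ⟨_, _, rfl, rfl, ?_⟩)⟩
        have hn0 : (n : ℤ) ≠ 0 := by omega
        have h1 := Int.emod_nonneg i hn0
        have h2 := Int.emod_nonneg (i + 1) hn0
        zify
        rw [Int.toNat_of_nonneg h1, Int.toNat_of_nonneg h2, Int.emod_add_emod]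
      · rw [cell, show (2 * i + 1) / 2 = i by omega, show (2 * i + 1 + 1) / 2 = i + 1 by omega]

/-- The cycle `C_n` is a second-player win. -/
theorem grundy_hub_removed {n : ℕ} [NeZero n] (hn : 3 ≤ n) :
    grundy (takeawayMove (graphComplex (wheelGraph n)) {none}) = 0 := by
  rw [grundy_eq_zero_iff]
  intro σ hσ
  obtain ⟨a, rfl⟩ := (mem_hub_removed hn σ).1 hσ
  refine two_fixed_ne_zero (reflect_involutive a) _ ?_ (σ' := cell n (a + n)) ?_ ?_
    ((mem_hub_removed hn _).2 ⟨_, rfl⟩) (not_cell_subset_antipode hn a) ?_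
  · intro s hs
    obtain ⟨k, rfl⟩ := (mem_hub_removed hn s).1 hs
    exact (mem_hub_removed hn _).2 ⟨_, image_reflect_cell a k⟩
  · rw [image_reflect_cell]
    congr 1
    ring
  · rw [image_reflect_cell]
    exact cell_eq_of_dvd ⟨-1, by ring⟩
  · intro s hs hfix
    obtain ⟨k, rfl⟩ := (mem_hub_removed hn s).1 hs
    rw [image_reflect_cell] at hfix
    obtain ⟨t, ht⟩ := dvd_of_cell_eq hn hfix
    -- A fixed index satisfies `k = a - n * t`; the parity of `t` decides between the two cells.
    have hk : a - k = n * t := by linarith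
    rcases Int.even_or_odd' t with ⟨u, rfl | rfl⟩
    · exact Or.inl (cell_eq_of_dvd ⟨-u, by linarith⟩)
    · exact Or.inr (cell_eq_of_dvd ⟨-u - 1, by linarith⟩)

/-- For every `n ≥ 3`, the wheel graph `W_n` is a first-player win in
graph chomp: its nim-value is nonzero. -/
theorem grundy_wheelGraph_ne_zero (n : ℕ) (hn : 3 ≤ n) :
    grundy (graphComplex (wheelGraph n)) ≠ 0 := by
  have : NeZero n := ⟨by omega⟩
  intro h0
  exact (grundy_eq_zero_iff _).1 h0 {none} (by simp [graphComplex]) (grundy_hub_removed hn)
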